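/- For every n ≥ 2, writing ℓ(T) for the number of vertices of degree 1 of a labeled tree T on [n], the sum over all labeled trees T on [n] of ℓ(T)·(ℓ(T) − 1) equals n·(n−1)·(n−2)^{n−2}. -/

import Mathlib

/-!
Both the count of labeled trees and the leaf statistic come from deleting leaves. If `S` is a set
of vertices of `[n]` with nonempty complement, a tree in which every vertex of `S` is a leaf is
the same as a tree on the complement of `S` together with a map from `S` to its complement, the
attaching map: two leaves in `S` cannot be adjacent, because they would form a whole component
(`card_treesWithLeaves`). Writing `t m` for the number of trees on `m` vertices, there are thus
`t (n - |S|) * (n - |S|) ^ |S|` trees whose leaf set contains `S`.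

Every tree on `n ≥ 3` vertices has a leaf, so inclusion-exclusion over the leaf set gives
`∑ k, (-1) ^ k * choose n k * t (n - k) * (n - k) ^ k = 0`. This determines `t n` from smaller
values, and `t m = m ^ (m - 2)` satisfies the recursion since the `n`-th finite difference of
`x ^ (n - 2)` vanishes; this proves Cayley's formula (`treeCount_eq`).

Finally `ℓ(T) * (ℓ(T) - 1)` counts ordered pairs of distinct leaves. Exchanging the sums, each of
the `n * (n - 1)` ordered pairs contributes `t (n - 2) * (n - 2) ^ 2 = (n - 2) ^ (n - 2)`.
-/

/-- The number of leaves (vertices of degree 1) of a graph on `Fin n`. -/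
noncomputable def leafCount {n : ℕ} (T : SimpleGraph (Fin n)) : ℕ :=
  Nat.card {v : Fin n // Nat.card (T.neighborSet v) = 1}

open Finset

namespace LeafSum

variable {V : Type*}

/-- `v` is a leaf of `G`, expressed as having exactly one neighbour. -/
def IsLeaf (G : SimpleGraph V) (v : V) : Prop := ∃! w, G.Adj v w

theorem IsLeaf.subsingleton {G : SimpleGraph V} {v : V} (h : IsLeaf G v) :
    (G.neighborSet v).Subsingleton := fun _ ha _ hb => h.unique ha hb

/-- The number of labeled trees on `m` vertices. -/
noncomputable def treeCount (m : ℕ) : ℕ := Nat.card {T : SimpleGraph (Fin m) // T.IsTree}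

theorem card_trees_eq_treeCount [Finite V] :
    Nat.card {T : SimpleGraph V // T.IsTree} = treeCount (Nat.card V) := by
  let e : V ≃ Fin (Nat.card V) := Finite.equivFin V
  exact Nat.card_congr (Equiv.subtypeEquiv e.simpleGraph fun T =>
    (SimpleGraph.Iso.isTree_iff (SimpleGraph.Iso.comap e.symm T)).symm)

/-! ### Deleting and attaching leaves -/

theorem exists_adj_of_reachable_ne {G : SimpleGraph V} {u w : V} (h : G.Reachable u w)
    (hne : u ≠ w) : ∃ x, G.Adj u x := by
  obtain ⟨p⟩ := h
  cases p with
  | nil => exact absurd rfl hne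
  | cons h _ => exact ⟨_, h⟩

/-- Two adjacent leaves form a component, so a connected graph containing them has no other
vertex. -/
theorem not_adj_of_isLeaf {G : SimpleGraph V} (hG : G.Preconnected) {u v w : V}
    (hu : IsLeaf G u) (hv : IsLeaf G v) (hwu : w ≠ u) (hwv : w ≠ v) : ¬ G.Adj u v := by
  intro huv
  have hc : (G.induce ({v}ᶜ : Set V)).Preconnected :=
    hG.induce_of_degree_eq_one fun x hx => by
      have : x = v := by simpa using hx
      subst this
      exact hv.subsingleton
  have hr := hc ⟨u, by simpa using huv.ne⟩ ⟨w, by simpa using hwv⟩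
  obtain ⟨x, hx⟩ := exists_adj_of_reachable_ne hr (by simpa using hwu.symm)
  exact x.2 (hu.unique (by simpa using hx) huv)

/-- The graph on `V` obtained from a graph `H` on the complement of `S` by joining each `s ∈ S`
to the single vertex `g s`. -/
def attach (S : Set V) (H : SimpleGraph ↥Sᶜ) (g : S → ↥Sᶜ) : SimpleGraph V where
  Adj u v := (∃ (hu : u ∈ Sᶜ) (hv : v ∈ Sᶜ), H.Adj ⟨u, hu⟩ ⟨v, hv⟩) ∨
    (∃ hu : u ∈ S, (g ⟨u, hu⟩ : V) = v) ∨ (∃ hv : v ∈ S, (g ⟨v, hv⟩ : V) = u)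
  symm := ⟨by
    rintro u v (⟨hu, hv, h⟩ | h | h)
    · exact Or.inl ⟨hv, hu, h.symm⟩
    · exact Or.inr (Or.inr h)
    · exact Or.inr (Or.inl h)⟩
  loopless := ⟨by
    rintro u (⟨hu, hv, h⟩ | ⟨hu, h⟩ | ⟨hu, h⟩)
    · exact H.irrefl h
    · exact (g ⟨u, hu⟩).2 (h.symm ▸ hu :)
    · exact (g ⟨u, hu⟩).2 (h.symm ▸ hu :)⟩

variable {S : Set V} {H : SimpleGraph ↥Sᶜ} {g : S → ↥Sᶜ}

theorem attach_adj_of_mem {u v : V} (hu : u ∈ S) :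
    (attach S H g).Adj u v ↔ v = g ⟨u, hu⟩ := by
  constructor
  · rintro (⟨hu', _, _⟩ | ⟨_, h⟩ | ⟨hv, h⟩)
    · exact absurd hu hu'
    · exact h.symm
    · exact absurd (h.symm ▸ hu :) (g ⟨v, hv⟩).2
  · rintro rfl
    exact Or.inr (Or.inl ⟨hu, rfl⟩)

theorem attach_induce : (attach S H g).induce Sᶜ = H := by
  ext ⟨u, hu⟩ ⟨v, hv⟩
  constructor
  · rintro (⟨_, _, h⟩ | ⟨h, _⟩ | ⟨h, _⟩)
    · exact h
    · exact absurd h hu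
    · exact absurd h hv
  · exact fun h => Or.inl ⟨hu, hv, h⟩

theorem attach_isLeaf {v : V} (hv : v ∈ S) : IsLeaf (attach S H g) v :=
  ⟨g ⟨v, hv⟩, (attach_adj_of_mem hv).2 rfl, fun _ h => (attach_adj_of_mem hv).1 h⟩

theorem isAcyclic_of_induce [Finite V] {G : SimpleGraph V} (hS : ∀ v ∈ S, IsLeaf G v)
    (h : (G.induce Sᶜ).IsAcyclic) : G.IsAcyclic := by
  intro u c hc
  -- A vertex on a cycle has two neighbours on it, so the cycle avoids the leaves.
  have hsupp : ∀ x ∈ c.support, x ∈ Sᶜ := by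
    intro x hx hxS
    have h2 := hc.ncard_neighborSet_toSubgraph_eq_two hx
    have hsub : c.toSubgraph.neighborSet x ⊆ G.neighborSet x :=
      c.toSubgraph.neighborSet_subset x
    have h1 := Set.ncard_le_one_iff_subsingleton.2 ((hS x hxS).subsingleton.anti hsub)
    omega
  refine h (c.induce Sᶜ hsupp) ?_
  have := SimpleGraph.Walk.map_induce c hsupp
  exact SimpleGraph.Walk.IsCycle.of_map (this.symm ▸ hc)

theorem attach_isTree [Finite V] (hH : H.IsTree) : (attach S H g).IsTree := by
  have hcon : ∀ a b : ↥Sᶜ, (attach S H g).Reachable a b := fun a b => by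
    have hab : ((attach S H g).induce Sᶜ).Reachable a b := by
      rw [attach_induce]; exact hH.connected.preconnected a b
    exact hab.map (SimpleGraph.Embedding.induce Sᶜ).toHom
  have hex : ∀ v : V, ∃ a : ↥Sᶜ, (attach S H g).Reachable v a := fun v => by
    by_cases hv : v ∈ S
    · exact ⟨g ⟨v, hv⟩, ((attach_adj_of_mem hv).2 rfl).reachable⟩
    · exact ⟨⟨v, hv⟩, SimpleGraph.Reachable.refl _⟩
  obtain ⟨a₀⟩ := hH.connected.nonempty
  have : Nonempty V := ⟨a₀.1⟩
  refine ⟨⟨fun u v => ?_⟩, ?_⟩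
  · obtain ⟨a, ha⟩ := hex u
    obtain ⟨b, hb⟩ := hex v
    exact ha.trans ((hcon a b).trans hb.symm)
  · exact isAcyclic_of_induce (S := S) (fun v hv => attach_isLeaf hv)
      (attach_induce (g := g) ▸ hH.isAcyclic)

/-- Trees on `V` in which every vertex of `S` is a leaf correspond to pairs of a tree on the
complement of `S` and an attaching map. -/
theorem card_treesWithLeaves [Finite V] (S : Set V) (hS : (Sᶜ : Set V).Nonempty) :
    Nat.card {T : SimpleGraph V // T.IsTree ∧ ∀ v ∈ S, IsLeaf T v} =
      treeCount (Nat.card ↥Sᶜ) * Nat.card ↥Sᶜ ^ Nat.card S := by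
  let Φ : {H : SimpleGraph ↥Sᶜ // H.IsTree} × (S → ↥Sᶜ) →
      {T : SimpleGraph V // T.IsTree ∧ ∀ v ∈ S, IsLeaf T v} := fun p =>
    ⟨attach S p.1.1 p.2, attach_isTree p.1.2, fun v hv => attach_isLeaf hv⟩
  have hΦ : Function.Bijective Φ := by
    constructor
    · rintro ⟨⟨H, hH⟩, g⟩ ⟨⟨H', hH'⟩, g'⟩ h
      have h' : attach S H g = attach S H' g' := congrArg Subtype.val h
      have hHH : H = H' := by
        rw [← attach_induce (H := H) (g := g), h', attach_induce]
      subst hHH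
      have hgg : g = g' := by
        funext s
        have : (attach S H g').Adj s (g s) := h' ▸ (attach_adj_of_mem s.2).2 rfl
        exact Subtype.ext ((attach_adj_of_mem s.2).1 this)
      subst hgg
      rfl
    · rintro ⟨T, hT, hL⟩
      obtain ⟨w, hw⟩ := hS
      have hnb : ∀ s : S, ∃ x : ↥Sᶜ, T.Adj s x := fun s => by
        obtain ⟨x, hx, -⟩ := hL s s.2
        refine ⟨⟨x, fun hxS => ?_⟩, hx⟩
        exact not_adj_of_isLeaf hT.connected.preconnected (w := w) (hL s s.2) (hL x hxS)
          (fun h => hw (h ▸ s.2)) (fun h => hw (h ▸ hxS)) hx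
      choose g hg using hnb
      have : Nonempty ↥Sᶜ := ⟨⟨w, hw⟩⟩
      have hH : (T.induce Sᶜ).IsTree :=
        ⟨⟨hT.connected.preconnected.induce_of_degree_eq_one fun v hv =>
          (hL v (not_not.1 hv)).subsingleton⟩, hT.isAcyclic.induce _⟩
      refine ⟨(⟨T.induce Sᶜ, hH⟩, g), Subtype.ext ?_⟩
      ext u v
      change (attach S (T.induce Sᶜ) g).Adj u v ↔ T.Adj u v
      have key : ∀ {a b : V} (ha : a ∈ S), (attach S (T.induce Sᶜ) g).Adj a b ↔ T.Adj a b :=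
        fun {a b} ha => by
          rw [attach_adj_of_mem ha]
          exact ⟨fun h => h ▸ hg ⟨a, ha⟩, fun h => (hL a ha).unique h (hg ⟨a, ha⟩)⟩
      by_cases hu : u ∈ S
      · exact key hu
      by_cases hv : v ∈ S
      · rw [SimpleGraph.adj_comm, T.adj_comm]
        exact key hv
      · have := congrArg (fun G : SimpleGraph ↥Sᶜ => G.Adj ⟨u, hu⟩ ⟨v, hv⟩)
          (attach_induce (H := T.induce Sᶜ) (g := g))
        simpa using this
  rw [← Nat.card_congr (Equiv.ofBijective Φ hΦ), Nat.card_prod, card_trees_eq_treeCount,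
    Nat.card_fun]

theorem treeCount_zero : treeCount 0 = 0 := by
  have : IsEmpty {T : SimpleGraph (Fin 0) // T.IsTree} :=
    ⟨fun T => T.2.connected.nonempty.elim fun x => x.elim0⟩
  exact Nat.card_of_isEmpty

/-- For `n ≥ 3` the formula also covers `S = univ`, where both sides vanish. -/
theorem card_treesWithLeaves_fin {n : ℕ} (hn : 3 ≤ n) (S : Finset (Fin n)) :
    Nat.card {T : SimpleGraph (Fin n) // T.IsTree ∧ ∀ v ∈ S, IsLeaf T v} =
      treeCount (n - #S) * (n - #S) ^ #S := by
  rcases (Set.eq_empty_or_nonempty ((S : Set (Fin n))ᶜ)) with h | h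
  · have hS : S = univ := by simpa using h
    subst hS
    have : IsEmpty {T : SimpleGraph (Fin n) // T.IsTree ∧ ∀ v ∈ univ, IsLeaf T v} := by
      refine ⟨fun ⟨T, hT, hL⟩ => ?_⟩
      let a : Fin n := ⟨0, by omega⟩
      obtain ⟨b, hab, -⟩ := hL a (mem_univ _)
      obtain ⟨w, hw⟩ : ∃ w, w ∉ ({a, b} : Finset (Fin n)) := by
        by_contra! hall
        have h1 : #(univ : Finset (Fin n)) ≤ #({a, b} : Finset (Fin n)) :=
          card_le_card fun x _ => hall x
        have h2 := card_le_two (a := a) (b := b)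
        simp at h1
        omega
      simp only [mem_insert, mem_singleton, not_or] at hw
      exact not_adj_of_isLeaf hT.connected.preconnected (hL a (mem_univ _)) (hL b (mem_univ _))
        hw.1 hw.2 hab
    rw [Nat.card_of_isEmpty]
    simp [treeCount_zero]
  · have := card_treesWithLeaves (S : Set (Fin n)) h
    have hc : Nat.card ↥((S : Set (Fin n))ᶜ) = n - #S := by
      rw [← Finset.coe_compl, Nat.card_eq_card_toFinset]
      simp [card_compl]
    rw [hc] at this
    simpa using this

/-! ### Cayley's formula -/

theorem treeCount_one : treeCount 1 = 1 := by
  have : Unique {T : SimpleGraph (Fin 1) // T.IsTree} :=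
    { default := ⟨⊥, .of_subsingleton⟩
      uniq := fun T => Subtype.ext (Subsingleton.elim _ _) }
  exact Nat.card_unique

theorem isTree_fin_two_iff (T : SimpleGraph (Fin 2)) : T.IsTree ↔ T = ⊤ := by
  constructor
  · intro hT
    have h01 : T.Adj 0 1 := by
      obtain ⟨x, hx⟩ := exists_adj_of_reachable_ne (hT.connected.preconnected 0 1) (by decide)
      have : x = 1 := by
        have := hx.ne
        omega
      exact this ▸ hx
    ext a b
    fin_cases a <;> fin_cases b <;> simp [h01, h01.symm]
  · rintro rfl
    exact ⟨SimpleGraph.connected_top, .of_card_le_two (by simp)⟩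

theorem treeCount_two : treeCount 2 = 1 := by
  have : Unique {T : SimpleGraph (Fin 2) // T.IsTree} :=
    { default := ⟨⊤, (isTree_fin_two_iff _).2 rfl⟩
      uniq := fun T => Subtype.ext ((isTree_fin_two_iff _).1 T.2) }
  exact Nat.card_unique

theorem exists_isLeaf {n : ℕ} (hn : 2 ≤ n) {T : SimpleGraph (Fin n)} (hT : T.IsTree) :
    ∃ v, IsLeaf T v := by
  classical
  have : Nontrivial (Fin n) := Fin.nontrivial_iff_two_le.2 hn
  obtain ⟨v, hv⟩ := hT.exists_vert_degree_one_of_nontrivial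
  exact ⟨v, SimpleGraph.degree_eq_one_iff_existsUnique_adj.1 hv⟩

/-- Inclusion-exclusion over the leaf set, which is never empty. -/
theorem sum_treeCount_eq_zero {n : ℕ} (hn : 3 ≤ n) :
    ∑ k ∈ range (n + 1), (-1 : ℤ) ^ (n - k) * n.choose k *
      ((treeCount k * k ^ (n - k) : ℕ) : ℤ) = 0 := by
  classical
  have h1 : ∑ S ∈ (univ : Finset (Fin n)).powerset, (-1 : ℤ) ^ #S *
      ((treeCount (n - #S) * (n - #S) ^ #S : ℕ) : ℤ) = 0 := by
    have h2 : ∀ S : Finset (Fin n), ((treeCount (n - #S) * (n - #S) ^ #S : ℕ) : ℤ) =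
        ∑ T : SimpleGraph (Fin n) with T.IsTree,
          if S ⊆ univ.filter (IsLeaf T) then 1 else 0 := by
      intro S
      rw [← card_treesWithLeaves_fin hn S, Nat.card_eq_fintype_card, Fintype.card_subtype,
        Finset.sum_boole, Finset.filter_filter]
      simp [Finset.subset_iff]
    simp_rw [h2, Finset.mul_sum]
    rw [Finset.sum_comm]
    refine Finset.sum_eq_zero fun T hT => ?_
    obtain ⟨v, hv⟩ := exists_isLeaf (by omega) (mem_filter.1 hT).2
    simp only [mul_ite, mul_one, mul_zero]
    rw [← Finset.sum_filter, ← Finset.sum_powerset_neg_one_pow_card_of_nonempty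
      (x := univ.filter (IsLeaf T)) ⟨v, by simpa using hv⟩]
    refine Finset.sum_congr ?_ fun _ _ => rfl
    ext S
    simp
  rw [Finset.sum_powerset_apply_card (fun k => (-1 : ℤ) ^ k *
      ((treeCount (n - k) * (n - k) ^ k : ℕ) : ℤ))] at h1
  rw [← Finset.sum_flip, ← h1]
  simp only [card_univ, Fintype.card_fin]
  refine Finset.sum_congr rfl fun k hk => ?_
  have hk' : k ≤ n := by simpa [Nat.lt_succ_iff] using hk
  rw [Nat.sub_sub_self hk', Nat.choose_symm hk', nsmul_eq_mul]
  ring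

/-- The `n`-th finite difference of `x ^ (n - 2)` at `0` vanishes. -/
theorem sum_pow_eq_zero {n : ℕ} (hn : 3 ≤ n) :
    ∑ k ∈ range (n + 1), (-1 : ℤ) ^ (n - k) * n.choose k * ((k ^ (n - 2) : ℕ) : ℤ) = 0 := by
  have h := congrFun (fwdDiff_iter_pow_eq_zero_of_lt (R := ℤ) (show n - 2 < n by omega)) 0
  rw [fwdDiff_iter_eq_sum_shift] at h
  simpa using h

/-- Cayley's formula; the truncated exponent is harmless at `m = 1`. -/
theorem treeCount_eq (m : ℕ) (hm : 1 ≤ m) : treeCount m = m ^ (m - 2) := by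
  induction m using Nat.strong_induction_on with
  | _ n ih =>
    rcases (by omega : n = 1 ∨ n = 2 ∨ 3 ≤ n) with rfl | rfl | hn
    · simp [treeCount_one]
    · simp [treeCount_two]
    have h1 := sum_treeCount_eq_zero hn
    have h2 := sum_pow_eq_zero hn
    rw [Finset.sum_range_succ] at h1 h2
    have h3 : ∀ k ∈ range n, treeCount k * k ^ (n - k) = k ^ (n - 2) := by
      intro k hk
      have hk := mem_range.1 hk
      rcases (by omega : k = 0 ∨ k = 1 ∨ 2 ≤ k) with rfl | rfl | hk2
      · rw [treeCount_zero, zero_mul, zero_pow (by omega)]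
      · simp [treeCount_one]
      · rw [ih k hk (by omega), ← pow_add]
        congr 1
        omega
    rw [Finset.sum_congr rfl fun k hk => by rw [h3 k hk]] at h1
    have h4 := h1.trans h2.symm
    simp at h4
    exact_mod_cast h4

/-! ### Counting ordered pairs of leaves -/

theorem leafCount_eq {n : ℕ} (T : SimpleGraph (Fin n)) [DecidablePred (IsLeaf T)] :
    leafCount T = #(univ.filter (IsLeaf T)) := by
  classical
  have h : ∀ v, Nat.card (T.neighborSet v) = 1 ↔ IsLeaf T v := fun v => by
    rw [Nat.card_eq_fintype_card, SimpleGraph.card_neighborSet_eq_degree,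
      SimpleGraph.degree_eq_one_iff_existsUnique_adj, IsLeaf]
  rw [leafCount, Nat.card_congr (Equiv.subtypeEquivRight h), Nat.card_eq_fintype_card,
    Fintype.card_subtype]

theorem isLeaf_top_fin_two (v : Fin 2) : IsLeaf (⊤ : SimpleGraph (Fin 2)) v := by
  refine ⟨1 - v, ?_, ?_⟩
  · fin_cases v <;> simp
  · fin_cases v <;> intro w <;> fin_cases w <;> simp

end LeafSum

open LeafSum in
/-- The sum over all labeled trees `T` on `[n]` of `ℓ(T)·(ℓ(T)−1)`, where `ℓ(T)` is the
number of leaves of `T`, equals `n·(n−1)·(n−2)^{n−2}`. -/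
theorem sum_leaf_count_falling (n : ℕ) (hn : 2 ≤ n) :
    (∑ᶠ T : {T : SimpleGraph (Fin n) // T.IsTree},
        leafCount T.val * (leafCount T.val - 1)) =
      n * (n - 1) * (n - 2) ^ (n - 2) := by
  classical
  rw [finsum_eq_sum_of_fintype]
  rcases (by omega : n = 2 ∨ 3 ≤ n) with rfl | hn3
  · have h : ∀ T : {T : SimpleGraph (Fin 2) // T.IsTree},
        leafCount T.val * (leafCount T.val - 1) = 2 := fun T => by
      rw [(isTree_fin_two_iff _).1 T.2, leafCount_eq,
        filter_true_of_mem fun v _ => isLeaf_top_fin_two v]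
      simp
    have h2 := treeCount_two
    rw [treeCount, Nat.card_eq_fintype_card] at h2
    simp [h, h2]
  have h1 : ∀ T : {T : SimpleGraph (Fin n) // T.IsTree},
      leafCount T.val * (leafCount T.val - 1) =
        ∑ p ∈ (univ : Finset (Fin n)).offDiag,
          if ∀ v ∈ ({p.1, p.2} : Finset (Fin n)), IsLeaf T.val v then 1 else 0 := fun T => by
    rw [leafCount_eq, Nat.mul_sub_one, ← offDiag_card, Finset.sum_boole, Nat.cast_id]
    congr 1
    ext p
    simp
    tauto
  simp_rw [h1]
  rw [Finset.sum_comm]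
  have h2 : ∀ p ∈ (univ : Finset (Fin n)).offDiag,
      (∑ T : {T : SimpleGraph (Fin n) // T.IsTree},
        if ∀ v ∈ ({p.1, p.2} : Finset (Fin n)), IsLeaf T.val v then 1 else 0) =
        (n - 2) ^ (n - 2) := by
    intro p hp
    have hne : p.1 ≠ p.2 := by simpa using hp
    have hcard := card_treesWithLeaves_fin hn3 {p.1, p.2}
    rw [card_pair hne, treeCount_eq _ (by omega)] at hcard
    rw [Finset.sum_boole, Nat.cast_id, ← Fintype.card_subtype, ← Nat.card_eq_fintype_card,
      Nat.card_congr (Equiv.subtypeSubtypeEquivSubtypeInter (fun T : SimpleGraph (Fin n) => T.IsTree)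
        fun T => ∀ v ∈ ({p.1, p.2} : Finset (Fin n)), IsLeaf T v), hcard, ← pow_add]
    -- At `n = 3` the exponents differ because of truncation, but the base is `1`.
    rcases (by omega : n = 3 ∨ 4 ≤ n) with rfl | h4
    · simp
    · congr 1
      omega
  rw [Finset.sum_congr rfl h2, sum_const, offDiag_card, card_univ, Fintype.card_fin,
    smul_eq_mul, Nat.mul_sub_one]
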